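/- Discrete mass conservation for the second-order (BDF2) structure-preserving IVS scheme (Theorem 3.3, first part): let M, τ > 0, N ≥ 1, and ξ², …, ξᴺ ∈ ℝ. Let φ⁰, φ¹, …, φᴺ, μ², …, μᴺ : ℝ^d → ℝ be C² and u⁰, …, u^{N−1} : ℝ^d → ℝ^d be C¹ with u^k = 0 on ∂Ω for all k. Assume ∫_Ω φ¹ dx = ∫_Ω φ⁰ dx and that for every 1 ≤ n ≤ N−1, pointwise on Ω, (3φ^{n+1} − 4φⁿ + φ^{n−1})/(2τ) + ξ^{n+1}∇·((2uⁿ − u^{n−1})(2φⁿ − φ^{n−1})) = MΔμ^{n+1}, with ∂ₙμ^{n+1} = 0 on ∂Ω. Then ∫_Ω φⁿ dx = ∫_Ω φ⁰ dx for every 0 ≤ n ≤ N. -/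

import Mathlib

open MeasureTheory Finset

noncomputable section

/-- Partial derivative of `f` in coordinate direction `i`. -/
def pd {d : ℕ} (i : Fin d) (f : (Fin d → ℝ) → ℝ) (x : Fin d → ℝ) : ℝ :=
  fderiv ℝ f x (Pi.single i 1)

/-- Divergence of a vector field. -/
def vdiv {d : ℕ} (u : (Fin d → ℝ) → Fin d → ℝ) (x : Fin d → ℝ) : ℝ :=
  ∑ i, pd i (fun y => u y i) x

/-- Laplacian. -/
def lap {d : ℕ} (f : (Fin d → ℝ) → ℝ) (x : Fin d → ℝ) : ℝ :=
  ∑ i, pd i (pd i f) x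

/-- Homogeneous Neumann boundary condition on the box `[a,b]`. -/
def neumannBC {d : ℕ} (a b : Fin d → ℝ) (f : (Fin d → ℝ) → ℝ) : Prop :=
  ∀ i : Fin d, ∀ x ∈ Set.Icc a b, (x i = a i ∨ x i = b i) → pd i f x = 0

/-!
Testing the scheme against the constant function `1` kills both spatial terms: the fluxes
`(2uⁿ - uⁿ⁻¹)(2φⁿ - φⁿ⁻¹)` and `∇μⁿ⁺¹` have zero normal component on every face of the box, so the
divergence theorem makes the integrals of their divergences vanish. The masses `mₙ = ∫ φⁿ` therefore
satisfy `3mₙ₊₁ - 4mₙ + mₙ₋₁ = 0`, that is, `3(mₙ₊₁ - mₙ) = mₙ - mₙ₋₁`, and `m₁ = m₀` propagates.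
-/

section Recurrence

variable {R : Type*} [CommRing R] [NoZeroDivisors R] [NeZero (3 : R)]

theorem eq_initial_of_bdf2_recurrence {m : ℕ → R} {N : ℕ} (h01 : m 1 = m 0)
    (hm : ∀ n, n + 2 ≤ N → 3 * m (n + 2) = 4 * m (n + 1) - m n) :
    ∀ n ≤ N, m n = m 0 := by
  have succ_eq : ∀ n, n + 1 ≤ N → m (n + 1) = m n := by
    intro n
    induction n with
    | zero => exact fun _ => h01
    | succ n ih =>
      intro hn
      refine mul_left_cancel₀ (three_ne_zero (α := R)) ?_
      linear_combination hm n hn + ih (by omega)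
  intro n
  induction n with
  | zero => exact fun _ => rfl
  | succ n ih => exact fun hn => (succ_eq n hn).trans (ih (by omega))

end Recurrence

section BDF2

variable {α : Type*} [MeasurableSpace α] {ν : Measure α} {f₀ f₁ f₂ g : α → ℝ} {τ : ℝ}

theorem three_mul_integral_eq_of_bdf2 (hτ : τ ≠ 0) (hf₀ : Integrable f₀ ν) (hf₁ : Integrable f₁ ν)
    (hg : Integrable g ν) (hg_mean : ∫ x, g x ∂ν = 0)
    (hbdf : ∀ᵐ x ∂ν, (3 * f₂ x - 4 * f₁ x + f₀ x) / (2 * τ) = g x) :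
    3 * ∫ x, f₂ x ∂ν = 4 * (∫ x, f₁ x ∂ν) - ∫ x, f₀ x ∂ν := by
  have hf₂ : ∀ᵐ x ∂ν, 3 * f₂ x = 4 * f₁ x - f₀ x + 2 * τ * g x := by
    filter_upwards [hbdf] with x hx
    rw [← hx]
    field_simp
    ring
  calc 3 * ∫ x, f₂ x ∂ν = ∫ x, (4 * f₁ x - f₀ x + 2 * τ * g x) ∂ν := by
        rw [← integral_const_mul, integral_congr_ae hf₂]
    _ = 4 * (∫ x, f₁ x ∂ν) - (∫ x, f₀ x ∂ν) + 2 * τ * ∫ x, g x ∂ν := by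
        rw [integral_add, integral_sub, integral_const_mul, integral_const_mul]
        · exact hf₁.const_mul 4
        · exact hf₀
        · exact (hf₁.const_mul 4).sub hf₀
        · exact hg.const_mul (2 * τ)
    _ = 4 * (∫ x, f₁ x ∂ν) - ∫ x, f₀ x ∂ν := by rw [hg_mean, mul_zero, add_zero]

end BDF2

theorem mem_frontier_Icc_of_mem_face {ι : Type*} [Finite ι] {a b x : ι → ℝ} {i : ι}
    (hx : x ∈ Set.Icc a b) (hface : x i = a i ∨ x i = b i) : x ∈ frontier (Set.Icc a b) := by
  rw [isClosed_Icc.frontier_eq]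
  refine ⟨hx, fun hx_int => ?_⟩
  rw [← Set.pi_univ_Icc, interior_pi_set Set.finite_univ] at hx_int
  have hxi : x i ∈ Set.Ioo (a i) (b i) := interior_Icc (a := a i) ▸ hx_int i (Set.mem_univ i)
  exact hface.elim hxi.1.ne' hxi.2.ne

section Box

variable {d : ℕ} {a b : Fin d → ℝ} {f : (Fin d → ℝ) → ℝ} {v : (Fin d → ℝ) → Fin d → ℝ}

/-- Gradient of `f`, as the vector of its partial derivatives; `lap f` is the divergence of this
flux. -/
def grad (f : (Fin d → ℝ) → ℝ) (x : Fin d → ℝ) : Fin d → ℝ :=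
  fun i => pd i f x

/-- Impermeable boundary condition: the vector field `v` has zero normal component on each face of
the box `[a,b]`. It covers both no-slip velocities and gradients of Neumann functions. -/
def NoFluxBC (a b : Fin d → ℝ) (v : (Fin d → ℝ) → Fin d → ℝ) : Prop :=
  ∀ i : Fin d, ∀ x ∈ Set.Icc a b, (x i = a i ∨ x i = b i) → v x i = 0

theorem vdiv_grad (f : (Fin d → ℝ) → ℝ) : vdiv (grad f) = lap f := rfl

theorem neumannBC_iff_noFluxBC_grad : neumannBC a b f ↔ NoFluxBC a b (grad f) := Iff.rfl

theorem contDiff_grad {n : WithTop ℕ∞} (hf : ContDiff ℝ (n + 1) f) : ContDiff ℝ n (grad f) :=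
  contDiff_pi.2 fun _ => (hf.fderiv_right le_rfl).clm_apply contDiff_const

theorem continuous_vdiv (hv : ContDiff ℝ 1 v) : Continuous (vdiv v) :=
  continuous_finsetSum _ fun i _ =>
    ((contDiff_pi.1 hv i).continuous_fderiv one_ne_zero).clm_apply continuous_const

theorem continuous_lap (hf : ContDiff ℝ 2 f) : Continuous (lap f) := by
  rw [← vdiv_grad]
  exact continuous_vdiv (contDiff_grad hf)

theorem NoFluxBC.of_frontier (hv : ∀ x ∈ frontier (Set.Icc a b), v x = 0) : NoFluxBC a b v :=
  fun i x hx hface => congrFun (hv x (mem_frontier_Icc_of_mem_face hx hface)) i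

theorem integral_vdiv_eq_zero (hcont : ContinuousOn v (Set.Icc a b))
    (hdiff : ∀ x ∈ Set.univ.pi fun i => Set.Ioo (a i) (b i), DifferentiableAt ℝ v x)
    (hint : IntegrableOn (vdiv v) (Set.Icc a b)) (hbc : NoFluxBC a b v) :
    ∫ x in Set.Icc a b, vdiv v x = 0 := by
  by_cases hab : a ≤ b
  swap
  · rw [Set.Icc_eq_empty hab, setIntegral_empty]
  obtain _ | n := d
  · simp [vdiv]
  have face_mem {i : Fin (n + 1)} {c : ℝ} (hc : c ∈ Set.Icc (a i) (b i)) {x : Fin n → ℝ}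
      (hx : x ∈ Set.Icc (a ∘ i.succAbove) (b ∘ i.succAbove)) :
      (i.insertNth c x : Fin (n + 1) → ℝ) ∈ Set.Icc a b :=
    Fin.insertNth_mem_Icc.2 ⟨hc, hx⟩
  refine (integral_divergence_of_hasFDerivAt_off_countable' a b hab (fun i y => v y i)
    (fun i => fderiv ℝ fun y => v y i) ∅ Set.countable_empty (continuousOn_pi.1 hcont)
    (fun x hx i => (differentiableAt_pi.1 (hdiff x hx.1) i).hasFDerivAt) hint).trans ?_
  refine Finset.sum_eq_zero fun i _ => ?_
  rw [setIntegral_eq_zero_of_forall_eq_zero, setIntegral_eq_zero_of_forall_eq_zero, sub_zero]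
  · exact fun x hx => hbc i _ (face_mem (Set.left_mem_Icc.2 (hab i)) hx) (.inl (by simp))
  · exact fun x hx => hbc i _ (face_mem (Set.right_mem_Icc.2 (hab i)) hx) (.inr (by simp))

theorem integral_vdiv_eq_zero_of_contDiff (hv : ContDiff ℝ 1 v) (hbc : NoFluxBC a b v) :
    ∫ x in Set.Icc a b, vdiv v x = 0 :=
  integral_vdiv_eq_zero hv.continuous.continuousOn
    (fun x _ => hv.differentiable one_ne_zero x) (continuous_vdiv hv).integrableOn_Icc hbc

theorem integral_lap_eq_zero (hf : ContDiff ℝ 2 f) (hbc : neumannBC a b f) :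
    ∫ x in Set.Icc a b, lap f x = 0 := by
  rw [← vdiv_grad]
  exact integral_vdiv_eq_zero_of_contDiff (contDiff_grad hf) (neumannBC_iff_noFluxBC_grad.1 hbc)

theorem three_mul_integral_eq_of_bdf2_convectionDiffusion {M τ ξ : ℝ} (hτ : τ ≠ 0)
    {f₀ f₁ f₂ μ : (Fin d → ℝ) → ℝ}
    (hf₀ : IntegrableOn f₀ (Set.Icc a b)) (hf₁ : IntegrableOn f₁ (Set.Icc a b))
    (hv : ContDiff ℝ 1 v) (hv_bc : NoFluxBC a b v)
    (hμ : ContDiff ℝ 2 μ) (hμ_bc : neumannBC a b μ)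
    (heq : ∀ x ∈ Set.Icc a b,
      (3 * f₂ x - 4 * f₁ x + f₀ x) / (2 * τ) + ξ * vdiv v x = M * lap μ x) :
    3 * ∫ x in Set.Icc a b, f₂ x
      = 4 * (∫ x in Set.Icc a b, f₁ x) - ∫ x in Set.Icc a b, f₀ x := by
  have hdiffusion : IntegrableOn (fun x => M * lap μ x) (Set.Icc a b) :=
    (continuous_lap hμ).integrableOn_Icc.const_mul M
  have hconvection : IntegrableOn (fun x => ξ * vdiv v x) (Set.Icc a b) :=
    (continuous_vdiv hv).integrableOn_Icc.const_mul ξ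
  refine three_mul_integral_eq_of_bdf2 hτ hf₀ hf₁ (hdiffusion.sub hconvection) ?_
    (ae_restrict_of_forall_mem measurableSet_Icc fun x hx => eq_sub_of_add_eq (heq x hx))
  calc ∫ x in Set.Icc a b, (M * lap μ x - ξ * vdiv v x)
      = M * (∫ x in Set.Icc a b, lap μ x) - ξ * ∫ x in Set.Icc a b, vdiv v x := by
        rw [integral_sub hdiffusion hconvection, integral_const_mul, integral_const_mul]
    _ = 0 := by
        rw [integral_lap_eq_zero hμ hμ_bc, integral_vdiv_eq_zero_of_contDiff hv hv_bc,
          mul_zero, mul_zero, sub_zero]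

end Box

theorem stmt2_general {d : ℕ} {a b : Fin d → ℝ} {M τ : ℝ} (hτ : τ ≠ 0) {N : ℕ} {ξ : ℕ → ℝ}
    {φ μ : ℕ → (Fin d → ℝ) → ℝ} {u : ℕ → (Fin d → ℝ) → Fin d → ℝ}
    (hφ : ∀ k ≤ N - 1, ContDiff ℝ 1 (φ k))
    (hμ : ∀ k, 2 ≤ k → k ≤ N → ContDiff ℝ 2 (μ k))
    (hu : ∀ k ≤ N - 1, ContDiff ℝ 1 (u k))
    (hubc : ∀ k ≤ N - 1, NoFluxBC a b (u k))
    (h1 : ∫ x in Set.Icc a b, φ 1 x = ∫ x in Set.Icc a b, φ 0 x)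
    (heq : ∀ n, 1 ≤ n → n ≤ N - 1 → ∀ x ∈ Set.Icc a b,
      (3 * φ (n + 1) x - 4 * φ n x + φ (n - 1) x) / (2 * τ)
        + ξ (n + 1) * vdiv (fun y i =>
            (2 * u n y i - u (n - 1) y i) * (2 * φ n y - φ (n - 1) y)) x
        = M * lap (μ (n + 1)) x)
    (hμbc : ∀ n, 1 ≤ n → n ≤ N - 1 → neumannBC a b (μ (n + 1))) :
    ∀ n ≤ N, ∫ x in Set.Icc a b, φ n x = ∫ x in Set.Icc a b, φ 0 x := by
  refine eq_initial_of_bdf2_recurrence (m := fun n => ∫ x in Set.Icc a b, φ n x) h1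
    fun n hn => ?_
  have hn₀ : n ≤ N - 1 := by omega
  have hn₁ : n + 1 ≤ N - 1 := by omega
  have hflux : ContDiff ℝ 1 fun y i =>
      (2 * u (n + 1) y i - u n y i) * (2 * φ (n + 1) y - φ n y) := by
    refine contDiff_pi.2 fun i => ContDiff.mul ?_ ?_
    · exact (contDiff_const.mul (contDiff_pi.1 (hu (n + 1) hn₁) i)).sub (contDiff_pi.1 (hu n hn₀) i)
    · exact (contDiff_const.mul (hφ (n + 1) hn₁)).sub (hφ n hn₀)
  have hflux_bc : NoFluxBC a b fun y i =>
      (2 * u (n + 1) y i - u n y i) * (2 * φ (n + 1) y - φ n y) := fun i x hx hface => by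
    simp [hubc n hn₀ i x hx hface, hubc (n + 1) hn₁ i x hx hface]
  exact three_mul_integral_eq_of_bdf2_convectionDiffusion hτ
    (hφ n hn₀).continuous.integrableOn_Icc (hφ (n + 1) hn₁).continuous.integrableOn_Icc
    hflux hflux_bc (hμ (n + 2) (by omega) hn) (hμbc (n + 1) (by omega) hn₁)
    (heq (n + 1) (by omega) hn₁)

/-- Discrete mass conservation for the second-order (BDF2) structure-preserving IVS
scheme (Theorem 3.3, first part). -/
theorem stmt2 (d : ℕ) (hd : 1 ≤ d) (a b : Fin d → ℝ) (hab : ∀ i, a i < b i)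
    (M τ : ℝ) (hM : 0 < M) (hτ : 0 < τ) (N : ℕ) (hN : 1 ≤ N)
    (ξ : ℕ → ℝ)
    (φ μ : ℕ → (Fin d → ℝ) → ℝ) (u : ℕ → (Fin d → ℝ) → Fin d → ℝ)
    (hφ : ∀ k ≤ N, ContDiff ℝ 2 (φ k))
    (hμ : ∀ k, 2 ≤ k → k ≤ N → ContDiff ℝ 2 (μ k))
    (hu : ∀ k ≤ N - 1, ContDiff ℝ 1 (u k))
    (hubc : ∀ k ≤ N - 1, ∀ x ∈ frontier (Set.Icc a b), u k x = 0)
    (h1 : ∫ x in Set.Icc a b, φ 1 x = ∫ x in Set.Icc a b, φ 0 x)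
    (heq : ∀ n, 1 ≤ n → n ≤ N - 1 → ∀ x ∈ Set.Icc a b,
      (3 * φ (n+1) x - 4 * φ n x + φ (n-1) x) / (2 * τ)
        + ξ (n+1) * vdiv (fun y i =>
            (2 * u n y i - u (n-1) y i) * (2 * φ n y - φ (n-1) y)) x
        = M * lap (μ (n+1)) x)
    (hμbc : ∀ n, 1 ≤ n → n ≤ N - 1 → neumannBC a b (μ (n+1))) :
    ∀ n ≤ N, ∫ x in Set.Icc a b, φ n x = ∫ x in Set.Icc a b, φ 0 x :=
  stmt2_general hτ.ne' (fun k hk => (hφ k (by omega)).of_le one_le_two) hμ hu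
    (fun k hk => .of_frontier (hubc k hk)) h1 heq hμbc
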